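/- Let G be a unicyclic graph of order n whose unique cycle C has odd length k, and let F = G − V(C). For t > 0 define M_G(t) = i^{−n}μ_G(it) and M_F(t) = i^{−(n−k)}μ_F(it). Then i^{−n}·φ_G(i·t) = M_G(t) + 2i·M_F(t) if k ≡ 1 (mod 4), and i^{−n}·φ_G(i·t) = M_G(t) − 2i·M_F(t) if k ≡ 3 (mod 4). In both cases i^{−n}·φ_G(i·t) has positive real part for every t > 0. -/

import Mathlib

variable {V : Type*}

/-- Number of matchings of size `j` in `H` (sets of `j` pairwise vertex-disjoint edges). -/
noncomputable def mcount (H : SimpleGraph V) (j : ℕ) : ℕ :=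
  Set.ncard {M : Finset (Sym2 V) | (∀ e ∈ M, e ∈ H.edgeSet) ∧ M.card = j ∧
    ∀ e ∈ M, ∀ f ∈ M, e ≠ f → ∀ v : V, ¬(v ∈ e ∧ v ∈ f)}

/-- The matching polynomial of `H`, as a function on `ℂ`. -/
noncomputable def matchPolyFun [Fintype V] (H : SimpleGraph V) (x : ℂ) : ℂ :=
  ∑ j ∈ Finset.range (Fintype.card V / 2 + 1),
    (-1 : ℂ) ^ j * (mcount H j : ℂ) * x ^ (Fintype.card V - 2 * j)

/-- The characteristic polynomial `det (x • 1 - A(G))` of the adjacency matrix, as a function. -/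
noncomputable def charFun [Fintype V] [DecidableEq V] (G : SimpleGraph V)
    [DecidableRel G.Adj] (x : ℂ) : ℂ :=
  (x • (1 : Matrix V V ℂ) - G.adjMatrix ℂ).det

/-- The adjacency matrix of a graph is Hermitian (symmetric). -/
theorem adjHerm [Fintype V] [DecidableEq V] (G : SimpleGraph V) [DecidableRel G.Adj] :
    (G.adjMatrix ℝ).IsHermitian := by
  rw [Matrix.IsHermitian, Matrix.conjTranspose_eq_transpose_of_trivial]
  exact SimpleGraph.isSymm_adjMatrix G

/-- Positive square energy. -/
noncomputable def sPlus [Fintype V] [DecidableEq V] (G : SimpleGraph V) [DecidableRel G.Adj] : ℝ :=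
  ∑ i, if 0 < (adjHerm G).eigenvalues i then ((adjHerm G).eigenvalues i) ^ 2 else 0

/-- Negative square energy. -/
noncomputable def sMinus [Fintype V] [DecidableEq V] (G : SimpleGraph V) [DecidableRel G.Adj] : ℝ :=
  ∑ i, if (adjHerm G).eigenvalues i < 0 then ((adjHerm G).eigenvalues i) ^ 2 else 0

/-!
In the Leibniz expansion of `φ_G(x)` only permutations `σ` sending every vertex to itself or to a
neighbour contribute, with weight `(-1) ^ #cycles * x ^ #fixed points`. The involutions among them
are the matchings of `G`, and their weights add up to `μ_G(x)`. When every cycle of `G` runs through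
the edges of `C`, a non-involution has to go around `C`, in one of two directions, and is arbitrary
on the forest `F = G - V(C)`; since `C` costs a sign, these terms add up to `-2 μ_F(x)`.
At `x = it` both matching polynomials become, up to powers of `i`, real and positive, and the
remaining factor `i^(-k)` is `∓i`.
-/

open Finset Equiv Equiv.Perm
open Function (Involutive)

section AlongEdges

variable {G H : SimpleGraph V} {σ : Perm V}

/-- A permutation *moves along* `G` if it sends every vertex it does not fix to a neighbour.
Only these permutations contribute to the Leibniz expansion of `charFun G`. -/
def MovesAlong (G : SimpleGraph V) (σ : Perm V) : Prop :=
  ∀ i, σ i ≠ i → G.Adj i (σ i)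

theorem MovesAlong.inv (hσ : MovesAlong G σ) : MovesAlong G σ⁻¹ := by
  intro i hi
  obtain ⟨j, rfl⟩ := σ.surjective i
  have hj : σ⁻¹ (σ j) = j := σ.symm_apply_apply j
  rw [hj] at hi ⊢
  exact (hσ j hi.symm).symm

theorem MovesAlong.deleteEdges {a b : V} (hσ : MovesAlong G σ) (hab : σ a ≠ b) (hba : σ b ≠ a) :
    MovesAlong (G.deleteEdges {s(a, b)}) σ := by
  intro i hi
  rw [SimpleGraph.deleteEdges_adj, Set.mem_singleton_iff, Sym2.eq_iff]
  refine ⟨hσ i hi, ?_⟩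
  rintro (⟨rfl, h⟩ | ⟨rfl, h⟩)
  exacts [hab h, hba h]

/-- If `σ (σ i) ≠ i`, no move of `σ` crosses the bridge from `σ i` back to `i`, so `σ` preserves
the side of `σ i`; being a permutation of that finite side, it cannot reach it from `i`. -/
theorem MovesAlong.involutive [Finite V] (hσ : MovesAlong G σ) (hG : G.IsAcyclic) :
    Involutive σ := by
  intro i
  by_contra hne
  have hi : σ i ≠ i := fun h ↦ hne (by rw [h, h])
  have hbridge := SimpleGraph.isAcyclic_iff_forall_adj_isBridge.mp hG (hσ i hi).symm
  let p : V → Prop := (G.deleteEdges {s(σ i, i)}).Reachable (σ i)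
  have hp : ∀ j, p j → p (σ j) := by
    intro j hj
    by_cases hji : j = i
    · subst hji; exact .rfl
    by_cases hfix : σ j = j
    · rwa [hfix]
    refine hj.trans (SimpleGraph.Adj.reachable ?_)
    rw [SimpleGraph.deleteEdges_adj, Set.mem_singleton_iff, Sym2.eq_iff]
    refine ⟨hσ j hfix, ?_⟩
    rintro (⟨rfl, h⟩ | ⟨h, -⟩)
    exacts [hne h, hji h]
  have hpi : p i := by
    simpa only [symm_apply_apply] using
      perm_symm_on_of_perm_on_finite (p := p) (fun j ↦ hp j) (.refl (σ i))
  exact SimpleGraph.isBridge_iff.mp hbridge hpi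

end AlongEdges

section CycleWeight

variable {R : Type*} [CommRing R] [Fintype V] [DecidableEq V]

/-- The contribution `(-1) ^ #cycles * x ^ #fixed points` of a permutation to a characteristic
polynomial; the cycles counted are the nontrivial ones. -/
def cycleWeight (x : R) (σ : Perm V) : R :=
  (-1) ^ σ.cycleType.card * x ^ #σ.supportᶜ

theorem sign_mul_neg_one_pow_card_support (σ : Perm V) :
    ((sign σ : ℤ) : R) * (-1) ^ #σ.support = (-1) ^ σ.cycleType.card := by
  rw [sign_of_cycleType, sum_cycleType]
  push_cast
  rw [pow_add, mul_right_comm, ← mul_pow, neg_mul_neg, one_mul, one_pow, one_mul]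

open scoped Classical in
theorem det_smul_one_sub_adjMatrix (G : SimpleGraph V) [DecidableRel G.Adj] (x : R) :
    (x • (1 : Matrix V V R) - G.adjMatrix R).det =
      ∑ σ : Perm V with MovesAlong G σ, cycleWeight x σ := by
  rw [Matrix.det_apply', sum_filter]
  refine sum_congr rfl fun σ _ ↦ ?_
  split_ifs with hσ
  · have hentry : ∀ i, (x • (1 : Matrix V V R) - G.adjMatrix R) (σ i) i =
        if i ∈ σ.support then -1 else x := by
      intro i
      by_cases hi : σ i = i
      · simp [hi]
      · simp [hi, (hσ i hi).symm, Matrix.one_apply_ne]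
    have hprod : ∏ i, (x • (1 : Matrix V V R) - G.adjMatrix R) (σ i) i =
        (-1) ^ #σ.support * x ^ #σ.supportᶜ := by
      rw [prod_congr rfl fun i _ ↦ hentry i, prod_ite, prod_const, prod_const,
        filter_mem_eq_inter, univ_inter, filter_notMem_eq_sdiff, compl_eq_univ_sdiff]
    rw [hprod, ← mul_assoc, sign_mul_neg_one_pow_card_support, cycleWeight]
  · simp only [MovesAlong, not_forall] at hσ
    obtain ⟨i, hi, hadj⟩ := hσ
    rw [prod_eq_zero (mem_univ i), mul_zero]
    simp [Matrix.one_apply_ne hi, mt SimpleGraph.Adj.symm hadj]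

theorem card_support_of_involutive {σ : Perm V} (hσ : Involutive σ) :
    #σ.support = 2 * σ.cycleType.card := by
  have hsq : σ ^ 2 = 1 := Equiv.ext fun i ↦ by rw [pow_two]; exact hσ i
  rw [← sum_cycleType, Multiset.eq_replicate_card.mpr (pow_prime_eq_one_iff.mp hsq),
    Multiset.sum_replicate, Multiset.card_replicate, smul_eq_mul, mul_comm]

end CycleWeight

section Matchings

variable [Fintype V] [DecidableEq V] {σ τ : Perm V}

/-- The set of pairs exchanged by a permutation `σ`. It is meant for involutions, which it puts in
correspondence with matchings. -/
def involutionEdges (σ : Perm V) : Finset (Sym2 V) :=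
  σ.support.image fun i ↦ s(i, σ i)

theorem movesAlong_iff_involutionEdges_subset {H : SimpleGraph V} :
    MovesAlong H σ ↔ ∀ e ∈ involutionEdges σ, e ∈ H.edgeSet := by
  simp only [MovesAlong, involutionEdges, forall_mem_image, mem_support, SimpleGraph.mem_edgeSet]

theorem mk_mem_involutionEdges (hσ : Involutive σ) {i j : V} :
    s(i, j) ∈ involutionEdges σ ↔ σ i = j ∧ i ≠ j := by
  simp only [involutionEdges, mem_image, mem_support, Sym2.eq_iff]
  constructor
  · rintro ⟨a, ha, ⟨rfl, rfl⟩ | ⟨rfl, rfl⟩⟩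
    exacts [⟨rfl, ha.symm⟩, ⟨hσ a, ha⟩]
  · rintro ⟨rfl, hi⟩
    exact ⟨i, hi.symm, .inl ⟨rfl, rfl⟩⟩

theorem involutionEdges_pairwise_disjoint (hσ : Involutive σ) :
    ∀ e ∈ involutionEdges σ, ∀ f ∈ involutionEdges σ, e ≠ f → ∀ v : V, ¬(v ∈ e ∧ v ∈ f) := by
  rintro _ he _ hf hne v ⟨⟨b, rfl⟩, ⟨b', rfl⟩⟩
  rw [mk_mem_involutionEdges hσ] at he hf
  exact hne (by rw [← he.1, ← hf.1])

theorem card_support_eq_two_mul_card_involutionEdges (hσ : Involutive σ) :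
    #σ.support = 2 * #(involutionEdges σ) := by
  rw [card_eq_sum_card_image fun i ↦ s(i, σ i)]
  refine (sum_const_nat fun e he ↦ ?_).trans (mul_comm _ _)
  obtain ⟨a, ha, rfl⟩ := mem_image.mp he
  have hfiber : {i ∈ σ.support | s(i, σ i) = s(a, σ a)} = {a, σ a} := by
    ext i
    simp only [mem_filter, mem_support, mem_insert, mem_singleton, Sym2.eq_iff]
    constructor
    · rintro ⟨-, ⟨hi, -⟩ | ⟨hi, -⟩⟩
      exacts [.inl hi, .inr hi]
    · rintro (rfl | rfl)
      · exact ⟨mem_support.mp ha, .inl ⟨rfl, rfl⟩⟩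
      · exact ⟨by rw [hσ]; exact (mem_support.mp ha).symm, .inr ⟨rfl, hσ a⟩⟩
  rw [hfiber, card_pair (mem_support.mp ha).symm]

theorem card_involutionEdges (hσ : Involutive σ) : #(involutionEdges σ) = σ.cycleType.card :=
  Nat.eq_of_mul_eq_mul_left two_pos <|
    (card_support_eq_two_mul_card_involutionEdges hσ).symm.trans (card_support_of_involutive hσ)

theorem involutionEdges_injOn :
    Set.InjOn (involutionEdges (V := V)) {σ | Involutive σ} := by
  intro σ (hσ : Involutive σ) τ (hτ : Involutive τ) hστ
  have hiff (i j : V) : σ i = j ∧ i ≠ j ↔ τ i = j ∧ i ≠ j := by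
    rw [← mk_mem_involutionEdges hσ, hστ, mk_mem_involutionEdges hτ]
  ext i
  by_cases hi : i = σ i
  · by_contra hne
    exact hne ((hiff i (τ i)).mpr ⟨rfl, fun h ↦ hne (hi.symm.trans h)⟩).1
  · exact ((hiff i (σ i)).mp ⟨rfl, hi⟩).1.symm

theorem exists_involutionEdges_eq {M : Finset (Sym2 V)} (hdiag : ∀ e ∈ M, ¬e.IsDiag)
    (hdisj : ∀ e ∈ M, ∀ f ∈ M, e ≠ f → ∀ v : V, ¬(v ∈ e ∧ v ∈ f)) :
    ∃ σ : Perm V, Involutive σ ∧ involutionEdges σ = M := by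
  have hpartner (a : V) : ∃ b, ∀ b', s(a, b') ∈ M ↔ b = b' ∧ a ≠ b' := by
    by_cases ha : ∃ b, s(a, b) ∈ M
    · obtain ⟨b, hb⟩ := ha
      refine ⟨b, fun b' ↦ ⟨fun hb' ↦ ⟨?_, hdiag _ hb'⟩, fun h ↦ h.1 ▸ hb⟩⟩
      by_contra hne
      exact hdisj _ hb _ hb' (mt Sym2.congr_right.mp hne) a
        ⟨Sym2.mem_mk_left a b, Sym2.mem_mk_left a b'⟩
    · exact ⟨a, fun b' ↦ ⟨fun h ↦ absurd ⟨b', h⟩ ha, fun h ↦ absurd h.1 h.2⟩⟩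
  choose f hf using hpartner
  have hinv : Involutive f := by
    intro a
    by_cases ha : a = f a
    · rw [← ha, ← ha]
    · have hmem : s(a, f a) ∈ M := (hf a _).mpr ⟨rfl, ha⟩
      rw [Sym2.eq_swap] at hmem
      exact ((hf _ _).mp hmem).1
  refine ⟨hinv.toPerm f, hinv, ?_⟩
  ext e
  induction e with
  | h a b => exact (mk_mem_involutionEdges (σ := hinv.toPerm f) hinv).trans (hf a b).symm

open scoped Classical in
theorem mcount_eq_card_involutive (H : SimpleGraph V) (j : ℕ) :
    mcount H j =
      #{σ : Perm V | (MovesAlong H σ ∧ Involutive σ) ∧ σ.cycleType.card = j} := by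
  rw [mcount, ← Set.ncard_coe_finset, ← Set.InjOn.ncard_image (f := involutionEdges)]
  · congr 1
    ext M
    simp only [Set.mem_ofPred_eq, Set.mem_image, coe_filter, mem_univ, true_and]
    constructor
    · rintro ⟨hM, hcard, hdisj⟩
      obtain ⟨σ, hσ, rfl⟩ :=
        exists_involutionEdges_eq (fun e he ↦ H.not_isDiag_of_mem_edgeSet (hM e he)) hdisj
      exact ⟨σ, ⟨⟨movesAlong_iff_involutionEdges_subset.mpr hM, hσ⟩,
        (card_involutionEdges hσ).symm.trans hcard⟩, rfl⟩
    · rintro ⟨σ, ⟨⟨hH, hσ⟩, hcard⟩, rfl⟩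
      exact ⟨movesAlong_iff_involutionEdges_subset.mp hH, (card_involutionEdges hσ).trans hcard,
        involutionEdges_pairwise_disjoint hσ⟩
  · exact involutionEdges_injOn.mono fun σ hσ ↦ (mem_filter.mp hσ).2.1.2

open scoped Classical in
theorem matchPolyFun_eq_sum_involutive (H : SimpleGraph V) (x : ℂ) :
    matchPolyFun H x =
      ∑ σ : Perm V with MovesAlong H σ ∧ Involutive σ, cycleWeight x σ := by
  have hmaps : ∀ σ ∈ ({σ | MovesAlong H σ ∧ Involutive σ} : Finset (Perm V)),
      σ.cycleType.card ∈ range (Fintype.card V / 2 + 1) := by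
    intro σ hσ
    have hle := card_le_univ σ.support
    rw [card_support_of_involutive (mem_filter.mp hσ).2.2] at hle
    rw [mem_range]
    lia
  rw [← sum_fiberwise_of_maps_to hmaps, matchPolyFun]
  refine sum_congr rfl fun j _ ↦ ?_
  have hweight : ∀ σ ∈ ({σ | (MovesAlong H σ ∧ Involutive σ) ∧ σ.cycleType.card = j} :
      Finset (Perm V)), cycleWeight x σ = (-1) ^ j * x ^ (Fintype.card V - 2 * j) := by
    intro σ hσ
    obtain ⟨⟨-, hinv⟩, rfl⟩ := (mem_filter.mp hσ).2
    rw [cycleWeight, card_compl, card_support_of_involutive hinv]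
  rw [mcount_eq_card_involutive, filter_filter, sum_congr rfl hweight, sum_const, nsmul_eq_mul]
  ring

end Matchings

open scoped Classical in
theorem charFun_eq_matchPolyFun_of_isAcyclic [Fintype V] [DecidableEq V] {G : SimpleGraph V}
    [DecidableRel G.Adj] (hG : G.IsAcyclic) (x : ℂ) : charFun G x = matchPolyFun G x := by
  rw [charFun, det_smul_one_sub_adjMatrix, matchPolyFun_eq_sum_involutive]
  exact sum_congr (filter_congr fun σ _ ↦ (and_iff_left_of_imp fun hσ ↦ hσ.involutive hG).symm)
    fun _ _ ↦ rfl

section CycleFactor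

variable {G : SimpleGraph V} {σ τ ρ : Perm V} {s : Set V}

theorem movesAlong_mul_iff_of_disjoint (h : σ.Disjoint τ) :
    MovesAlong G (σ * τ) ↔ MovesAlong G σ ∧ MovesAlong G τ := by
  have hleft {i : V} (hi : τ i = i) : (σ * τ) i = σ i := by rw [mul_apply, hi]
  have hright {i : V} (hi : σ i = i) : (σ * τ) i = τ i := by rw [h.commute.eq, mul_apply, hi]
  constructor
  · refine fun hστ ↦ ⟨fun i hi ↦ ?_, fun i hi ↦ ?_⟩
    · have hi' := hleft ((h i).resolve_left hi)
      exact hi' ▸ hστ i (hi' ▸ hi)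
    · have hi' := hright ((h i).resolve_right hi)
      exact hi' ▸ hστ i (hi' ▸ hi)
  · rintro ⟨hσ, hτ⟩ i hi
    rcases h i with hfix | hfix
    · rw [hright hfix] at hi ⊢
      exact hτ i hi
    · rw [hleft hfix] at hi ⊢
      exact hσ i hi

theorem movesAlong_ofSubtype_iff [DecidablePred (· ∈ s)] {π : Perm s} :
    MovesAlong G (ofSubtype π) ↔ MovesAlong (G.induce s) π := by
  constructor
  · intro hπ i hi
    rw [SimpleGraph.comap_adj]
    have h := hπ i
    rw [ofSubtype_apply_coe] at h
    exact h (Subtype.coe_ne_coe.mpr hi)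
  · intro hπ i hi
    by_cases his : i ∈ s
    · lift i to s using his
      rw [ofSubtype_apply_coe] at hi ⊢
      exact hπ i (Subtype.coe_ne_coe.mp hi)
    · exact absurd (ofSubtype_apply_of_not_mem π his) hi

theorem mem_range_ofSubtype_iff_disjoint [DecidablePred (· ∈ s)]
    (hs : ∀ i, i ∈ s ↔ ρ i = i) :
    (∃ π : Perm s, ofSubtype π = σ) ↔ σ.Disjoint ρ := by
  constructor
  · rintro ⟨π, rfl⟩ i
    exact (em (i ∈ s)).symm.imp (ofSubtype_apply_of_not_mem π) (hs i).mp
  · intro h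
    have hmem (i : V) : σ i ∈ s ↔ i ∈ s := by
      rw [hs, hs, ← mul_apply, ← h.commute.eq, mul_apply, σ.injective.eq_iff]
    exact ⟨σ.subtypePerm hmem, ofSubtype_subtypePerm hmem fun i hi ↦
      (hs i).mpr ((h i).resolve_left hi)⟩

variable [Fintype V] [DecidableEq V]

theorem mem_cycleFactorsFinset_mul_of_disjoint (hρ : ρ.IsCycle) (h : σ.Disjoint ρ) :
    ρ ∈ (σ * ρ).cycleFactorsFinset :=
  mem_cycleFactorsFinset_iff.mpr ⟨hρ, fun i hi ↦
    ((h (ρ i)).resolve_right (mem_support.mp (apply_mem_support.mpr hi))).symm⟩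

theorem cycleWeight_mul_of_disjoint_isCycle {R : Type*} [CommRing R] [Fintype s]
    [DecidablePred (· ∈ s)] (hρ : ρ.IsCycle) (hs : ∀ i, i ∈ s ↔ ρ i = i) (x : R) (π : Perm s) :
    cycleWeight x (ofSubtype π * ρ) = -cycleWeight x π := by
  have hdisj : (ofSubtype π).Disjoint ρ := (mem_range_ofSubtype_iff_disjoint hs).mp ⟨π, rfl⟩
  have hcard : Fintype.card s = #ρ.supportᶜ :=
    Fintype.card_of_finset' _ fun i ↦ by rw [mem_compl, notMem_support, hs]
  have hπ : #(ofSubtype π).support = #π.support := by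
    rw [← sum_cycleType, cycleType_ofSubtype, sum_cycleType]
  have hfixed : #(ofSubtype π * ρ).supportᶜ = #π.supportᶜ := by
    rw [card_compl, card_compl, hdisj.card_support_mul, hcard, card_compl, hπ, add_comm,
      Nat.sub_add_eq]
  rw [cycleWeight, cycleWeight, hfixed, hdisj.cycleType_mul, hρ.cycleType, cycleType_ofSubtype,
    Multiset.card_add, Multiset.card_singleton, pow_add, pow_one, mul_neg_one, neg_mul]

open scoped Classical in
theorem sum_cycleWeight_of_mem_cycleFactorsFinset {R : Type*} [CommRing R] [Fintype s]
    (hρ : ρ.IsCycle) (hG : MovesAlong G ρ) (hs : ∀ i, i ∈ s ↔ ρ i = i) (x : R) :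
    ∑ σ : Perm V with MovesAlong G σ ∧ ρ ∈ σ.cycleFactorsFinset, cycleWeight x σ =
      -∑ π : Perm s with MovesAlong (G.induce s) π, cycleWeight x π := by
  rw [← sum_neg_distrib]
  symm
  refine sum_nbij (fun π ↦ ofSubtype π * ρ) ?_ ?_ ?_ fun π _ ↦
    (cycleWeight_mul_of_disjoint_isCycle hρ hs x π).symm
  · intro π hπ
    have hdisj : (ofSubtype π).Disjoint ρ := (mem_range_ofSubtype_iff_disjoint hs).mp ⟨π, rfl⟩
    simp only [mem_filter, mem_univ, true_and] at hπ ⊢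
    exact ⟨(movesAlong_mul_iff_of_disjoint hdisj).mpr ⟨movesAlong_ofSubtype_iff.mpr hπ, hG⟩,
      mem_cycleFactorsFinset_mul_of_disjoint hρ hdisj⟩
  · exact fun π _ π' _ h ↦ ofSubtype_injective (mul_right_cancel h)
  · intro σ hσ
    obtain ⟨hσG, hσρ⟩ := (mem_filter.mp hσ).2
    have hdisj := disjoint_mul_inv_of_mem_cycleFactorsFinset hσρ
    obtain ⟨π, hπ⟩ := (mem_range_ofSubtype_iff_disjoint hs).mpr hdisj
    have hmul : ofSubtype π * ρ = σ := by rw [hπ, inv_mul_cancel_right]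
    rw [← hπ] at hdisj
    rw [← hmul, movesAlong_mul_iff_of_disjoint hdisj] at hσG
    exact ⟨π, mem_coe.mpr (mem_filter.mpr ⟨mem_univ π, movesAlong_ofSubtype_iff.mp hσG.1⟩), hmul⟩

end CycleFactor

theorem isAcyclic_induce_of_deleteEdges {G : SimpleGraph V} {a b : V} {s : Set V} (ha : a ∉ s)
    (h : (G.deleteEdges {s(a, b)}).IsAcyclic) : (G.induce s).IsAcyclic := by
  refine (h.induce s).anti fun i j hij ↦ ?_
  rw [SimpleGraph.comap_adj, SimpleGraph.deleteEdges_adj, Set.mem_singleton_iff, Sym2.eq_iff]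
  refine ⟨hij, ?_⟩
  rintro (⟨rfl, -⟩ | ⟨-, rfl⟩)
  exacts [ha i.2, ha j.2]

section NonInvolutive

variable {G : SimpleGraph V} {σ ρ : Perm V}

theorem not_involutive_inv (hρ : ¬Involutive ρ) : ¬Involutive (ρ⁻¹ : Perm V) := by
  refine fun h ↦ hρ fun i ↦ ?_
  have hi := h (ρ (ρ i))
  rwa [Perm.inv_def, symm_apply_apply, symm_apply_apply, eq_comm] at hi

theorem apply_apply_ne_of_isCycle (hρ : ρ.IsCycle) (hinv : ¬Involutive ρ) {a : V}
    (ha : ρ a ≠ a) : ρ (ρ a) ≠ a := by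
  classical
  refine fun h ↦ hinv fun i ↦ ?_
  rw [hρ.eq_swap_of_apply_apply_eq_self ha h, ← mul_apply, swap_mul_self, one_apply]

theorem apply_eq_or_eq_of_not_involutive [Finite V] {a b : V}
    (hG : (G.deleteEdges {s(a, b)}).IsAcyclic) (hσ : MovesAlong G σ) (hinv : ¬Involutive σ) :
    σ a = b ∨ σ b = a := by
  by_contra! h
  exact hinv ((hσ.deleteEdges h.1 h.2).involutive hG)

variable [Fintype V] [DecidableEq V]

theorem not_involutive_of_mem_cycleFactorsFinset (hρ : ¬Involutive ρ)
    (h : ρ ∈ σ.cycleFactorsFinset) : ¬Involutive σ := by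
  have hagree := (mem_cycleFactorsFinset_iff.mp h).2
  refine fun hσ ↦ hρ fun i ↦ ?_
  by_cases hi : i ∈ ρ.support
  · rw [hagree _ (apply_mem_support.mpr hi), hagree i hi, hσ]
  · rw [notMem_support.mp hi, notMem_support.mp hi]

theorem involutive_of_mem_cycleFactorsFinset_inv (h : ρ ∈ σ.cycleFactorsFinset)
    (h' : ρ⁻¹ ∈ σ.cycleFactorsFinset) : Involutive ρ := by
  have hρ : ρ = ρ⁻¹ := support_congr (support_inv ρ).ge fun i hi ↦ by
    rw [(mem_cycleFactorsFinset_iff.mp h').2 i hi,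
      (mem_cycleFactorsFinset_iff.mp h).2 i (support_inv ρ ▸ hi)]
  intro i
  nth_rw 1 [hρ]
  exact ρ.symm_apply_apply i

theorem mem_cycleFactorsFinset_of_apply_eq (hρ : ρ.IsCycle)
    (hstep : ∀ a ∈ ρ.support, σ a = ρ a → σ (ρ a) = ρ (ρ a)) {a : V} (ha : a ∈ ρ.support)
    (hσ : σ a = ρ a) : ρ ∈ σ.cycleFactorsFinset := by
  refine mem_cycleFactorsFinset_iff.mpr ⟨hρ, fun b hb ↦ ?_⟩
  obtain ⟨n, rfl⟩ := hρ.exists_pow_eq (mem_support.mp ha) (mem_support.mp hb)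
  induction n with
  | zero => exact hσ.symm
  | succ n ih =>
    have hn : (ρ ^ n) a ∈ ρ.support := pow_apply_mem_support.mpr ha
    rw [pow_succ', mul_apply]
    exact (hstep _ hn (ih hn).symm).symm

theorem mem_cycleFactorsFinset_or_inv_mem (hρ : ρ.IsCycle) (hρinv : ¬Involutive ρ)
    (hacyc : ∀ a ∈ ρ.support, (G.deleteEdges {s(a, ρ a)}).IsAcyclic)
    (hσ : MovesAlong G σ) (hσinv : ¬Involutive σ) :
    ρ ∈ σ.cycleFactorsFinset ∨ ρ⁻¹ ∈ σ.cycleFactorsFinset := by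
  have hdir : ∀ a ∈ ρ.support, σ a = ρ a ∨ σ (ρ a) = a := fun a ha ↦
    apply_eq_or_eq_of_not_involutive (hacyc a ha) hσ hσinv
  by_cases hforward : ∃ a ∈ ρ.support, σ a = ρ a
  · obtain ⟨a, ha, hσa⟩ := hforward
    refine .inl (mem_cycleFactorsFinset_of_apply_eq hρ (fun b hb hσb ↦ ?_) ha hσa)
    have hρb : ρ b ∈ ρ.support := apply_mem_support.mpr hb
    refine (hdir _ hρb).resolve_right fun h ↦ ?_
    exact apply_apply_ne_of_isCycle hρ hρinv (mem_support.mp hb) (σ.injective (h.trans hσb.symm))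
  · push Not at hforward
    refine .inr (mem_cycleFactorsFinset_iff.mpr ⟨hρ.inv, fun b hb ↦ ?_⟩)
    rw [support_inv] at hb
    obtain ⟨a, rfl⟩ := ρ.surjective b
    rw [apply_mem_support] at hb
    exact (ρ.symm_apply_apply a).trans ((hdir a hb).resolve_left (hforward a hb)).symm

open scoped Classical in
theorem sum_cycleWeight_of_not_involutive {R : Type*} [CommRing R] (hρ : ρ.IsCycle)
    (hinv : ¬Involutive ρ) (hacyc : ∀ a ∈ ρ.support, (G.deleteEdges {s(a, ρ a)}).IsAcyclic)
    (x : R) :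
    ∑ σ : Perm V with MovesAlong G σ ∧ ¬Involutive σ, cycleWeight x σ =
      ∑ σ : Perm V with MovesAlong G σ ∧ ρ ∈ σ.cycleFactorsFinset, cycleWeight x σ +
        ∑ σ : Perm V with MovesAlong G σ ∧ ρ⁻¹ ∈ σ.cycleFactorsFinset, cycleWeight x σ := by
  have hsplit (σ : Perm V) : MovesAlong G σ ∧ ¬Involutive σ ↔
      (MovesAlong G σ ∧ ρ ∈ σ.cycleFactorsFinset) ∨
        (MovesAlong G σ ∧ ρ⁻¹ ∈ σ.cycleFactorsFinset) := by
    rw [← and_or_left, and_congr_right_iff]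
    exact fun hσ ↦ ⟨mem_cycleFactorsFinset_or_inv_mem hρ hinv hacyc hσ, fun h ↦
      h.elim (not_involutive_of_mem_cycleFactorsFinset hinv)
        (not_involutive_of_mem_cycleFactorsFinset (not_involutive_inv hinv))⟩
  rw [filter_congr fun σ _ ↦ hsplit σ, filter_or, sum_union]
  exact disjoint_filter.mpr fun σ _ h h' ↦
    hinv (involutive_of_mem_cycleFactorsFinset_inv h.2 h'.2)

open scoped Classical in
theorem charFun_eq_matchPolyFun_sub_of_perm [DecidableRel G.Adj] {s : Set V} [Fintype s]
    (hρ : ρ.IsCycle) (hinv : ¬Involutive ρ) (hG : MovesAlong G ρ)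
    (hacyc : ∀ a ∈ ρ.support, (G.deleteEdges {s(a, ρ a)}).IsAcyclic)
    (hs : ∀ i, i ∈ s ↔ ρ i = i) (x : ℂ) :
    charFun G x = matchPolyFun G x - 2 * matchPolyFun (G.induce s) x := by
  have hs' (i : V) : i ∈ s ↔ ρ⁻¹ i = i := by rw [hs, inv_eq_iff_eq, eq_comm]
  obtain ⟨a, ha⟩ := hρ.nonempty_support
  have hF : (G.induce s).IsAcyclic :=
    isAcyclic_induce_of_deleteEdges (mt (hs a).mp (mem_support.mp ha)) (hacyc a ha)
  rw [charFun, det_smul_one_sub_adjMatrix,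
    ← sum_filter_add_sum_filter_not _ fun σ : Perm V ↦ Involutive σ, filter_filter,
    filter_filter, sum_cycleWeight_of_not_involutive hρ hinv hacyc,
    sum_cycleWeight_of_mem_cycleFactorsFinset hρ hG hs,
    sum_cycleWeight_of_mem_cycleFactorsFinset hρ.inv hG.inv hs',
    ← matchPolyFun_eq_sum_involutive, ← det_smul_one_sub_adjMatrix, ← charFun,
    charFun_eq_matchPolyFun_of_isAcyclic hF]
  ring

end NonInvolutive

section CyclePerm

variable [DecidableEq V] {G : SimpleGraph V} {v : V} {c : G.Walk v v}

/-- The permutation moving each vertex of a closed walk `c` one step forward, provided that `c` is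
a cycle. The base point is listed only once, at the end. -/
def cyclePerm (c : G.Walk v v) : Perm V :=
  c.support.tail.formPerm

theorem isCycle_cyclePerm (hc : c.IsCycle) : (cyclePerm c).IsCycle := by
  have hlength := hc.three_le_length
  refine List.isCycle_formPerm hc.support_nodup ?_
  rw [List.length_tail, SimpleGraph.Walk.length_support]
  lia

theorem cyclePerm_rotate (hc : c.IsCycle) {a : V} (ha : a ∈ c.support) :
    cyclePerm (c.rotate a ha) = cyclePerm c :=
  (List.formPerm_eq_of_isRotated hc.support_nodup (c.support_rotate a ha).symm).symm

theorem mk_cyclePerm_apply_start_mem_edges (hc : c.IsCycle) :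
    s(v, cyclePerm c v) ∈ c.edges := by
  cases c with
  | nil => exact absurd hc SimpleGraph.Walk.not_isCycle_nil
  | @cons _ u _ _ p =>
    have hp : p.support.formPerm v = u := by
      have hlast := List.formPerm_apply_getLast u p.support.tail
      simp_rw [p.cons_tail_support, p.getLast_support] at hlast
      exact hlast
    rw [cyclePerm, SimpleGraph.Walk.support_cons, List.tail_cons, hp,
      SimpleGraph.Walk.edges_cons]
    exact List.mem_cons_self

theorem mk_cyclePerm_apply_mem_edges (hc : c.IsCycle) {a : V}
    (ha : a ∈ c.support) : s(a, cyclePerm c a) ∈ c.edges := by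
  rw [← cyclePerm_rotate hc ha, ← (c.rotate_edges a ha).mem_iff]
  exact mk_cyclePerm_apply_start_mem_edges (hc.rotate ha)

theorem movesAlong_cyclePerm (hc : c.IsCycle) : MovesAlong G (cyclePerm c) :=
  fun _ hi ↦ c.adj_of_mem_edges <| mk_cyclePerm_apply_mem_edges hc <|
    List.mem_of_mem_tail (List.mem_of_formPerm_apply_ne hi)

theorem not_involutive_cyclePerm (hc : c.IsCycle) : ¬Involutive (cyclePerm c) := by
  intro h
  have hlength : 2 < c.support.tail.length := by
    rw [List.length_tail, SimpleGraph.Walk.length_support]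
    exact hc.three_le_length
  have hreturn := h c.support.tail[0]
  rw [cyclePerm, List.formPerm_apply_lt_getElem _ hc.support_nodup 0 (by lia),
    List.formPerm_apply_lt_getElem _ hc.support_nodup 1 (by lia),
    hc.support_nodup.getElem_inj_iff] at hreturn
  lia

variable [Fintype V]

theorem support_cyclePerm_eq_tail (hc : c.IsCycle) :
    (cyclePerm c).support = c.support.tail.toFinset := by
  refine List.support_formPerm_of_nodup _ hc.support_nodup fun i hi ↦ ?_
  have hlength := congrArg List.length hi
  rw [List.length_tail, SimpleGraph.Walk.length_support, List.length_singleton] at hlength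
  have hthree := hc.three_le_length
  lia

theorem support_cyclePerm (hc : c.IsCycle) : (cyclePerm c).support = c.support.toFinset := by
  rw [support_cyclePerm_eq_tail hc, ← c.cons_tail_support, List.toFinset_cons, List.tail_cons,
    insert_eq_self.mpr (List.mem_toFinset.mpr (c.end_mem_tail_support hc.not_nil))]

theorem card_support_cyclePerm (hc : c.IsCycle) : #(cyclePerm c).support = c.length := by
  rw [support_cyclePerm_eq_tail hc, List.toFinset_card_of_nodup hc.support_nodup,
    List.length_tail, SimpleGraph.Walk.length_support, Nat.add_sub_cancel]

end CyclePerm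

section UniqueCycle

variable {G : SimpleGraph V} {v : V} {c : G.Walk v v}

/-- `c` is a cycle and traverses the same edges as every other cycle of `G`. Base point and
orientation are thus disregarded. -/
structure IsUniqueCycle (c : G.Walk v v) : Prop where
  isCycle : c.IsCycle
  mem_edges_iff : ∀ ⦃w : V⦄ (d : G.Walk w w), d.IsCycle → ∀ e, e ∈ d.edges ↔ e ∈ c.edges

theorem IsUniqueCycle.isAcyclic_deleteEdges (hc : IsUniqueCycle c) {e : Sym2 V}
    (he : e ∈ c.edges) : (G.deleteEdges {e}).IsAcyclic := by
  intro w d hd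
  have hle := G.deleteEdges_le {e}
  have hmem := (hc.mem_edges_iff (d.mapLe hle) (hd.mapLe hle) e).mpr he
  rw [SimpleGraph.Walk.edges_mapLe_eq_edges] at hmem
  have hedge := d.edges_subset_edgeSet hmem
  rw [SimpleGraph.edgeSet_deleteEdges] at hedge
  exact hedge.2 rfl

theorem isTree_deleteEdges_of_isCycle [Fintype V] [Fintype G.edgeSet] (hconn : G.Connected)
    (hedge : #G.edgeFinset = Fintype.card V) (hc : c.IsCycle) {e : Sym2 V} (he : e ∈ c.edges) :
    (G.deleteEdges {e}).IsTree := by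
  induction e with
  | h a b =>
    have hbridge : ¬G.IsBridge s(a, b) := fun h ↦ h.notMem_edges_of_isCycle hc he
    refine SimpleGraph.isTree_iff_connected_and_card.mpr
      ⟨hconn.connected_delete_edge_of_not_isBridge hbridge, ?_⟩
    rw [Nat.card_coe_set_eq, SimpleGraph.edgeSet_deleteEdges,
      Set.ncard_sdiff_singleton_add_one (c.edges_subset_edgeSet he), Nat.card_eq_fintype_card,
      ← hedge, ← Set.ncard_coe_finset, SimpleGraph.coe_edgeFinset]

theorem edges_subset_edges_of_isCycle [Fintype V] [Fintype G.edgeSet] (hconn : G.Connected)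
    (hedge : #G.edgeFinset = Fintype.card V) (hc : c.IsCycle) {w : V} {d : G.Walk w w}
    (hd : d.IsCycle) : c.edges ⊆ d.edges := by
  intro e he
  by_contra hed
  exact (isTree_deleteEdges_of_isCycle hconn hedge hc he).isAcyclic _
    (hd.toDeleteEdges G {e} fun f hf hfe ↦ hed (Set.mem_singleton_iff.mp hfe ▸ hf))

theorem isUniqueCycle_of_connected [Fintype V] [Fintype G.edgeSet] (hconn : G.Connected)
    (hedge : #G.edgeFinset = Fintype.card V) (hc : c.IsCycle) : IsUniqueCycle c :=
  ⟨hc, fun _ _ hd _ ↦ ⟨fun h ↦ edges_subset_edges_of_isCycle hconn hedge hd hc h,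
    fun h ↦ edges_subset_edges_of_isCycle hconn hedge hc hd h⟩⟩

theorem IsUniqueCycle.charFun_eq [Fintype V] [DecidableEq V] [DecidableRel G.Adj]
    (hc : IsUniqueCycle c) (x : ℂ) :
    charFun G x = matchPolyFun G x - 2 * matchPolyFun (G.induce ↑(c.support.toFinset)ᶜ) x := by
  have hcycle := hc.isCycle
  refine charFun_eq_matchPolyFun_sub_of_perm (isCycle_cyclePerm hcycle)
    (not_involutive_cyclePerm hcycle) (movesAlong_cyclePerm hcycle) (fun a ha ↦ ?_) (fun i ↦ ?_) x
  · rw [support_cyclePerm hcycle, List.mem_toFinset] at ha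
    exact hc.isAcyclic_deleteEdges (mk_cyclePerm_apply_mem_edges hcycle ha)
  · rw [← notMem_support, support_cyclePerm hcycle]
    simp

end UniqueCycle

theorem mcount_zero_pos [Finite V] (H : SimpleGraph V) : 0 < mcount H 0 := by
  rw [mcount, Set.ncard_pos (Set.toFinite _)]
  exact ⟨∅, by simp⟩

theorem I_zpow_neg_of_mod_four_eq_one {k : ℕ} (hk : k % 4 = 1) :
    Complex.I ^ (-(k : ℤ)) = -Complex.I := by
  rw [zpow_neg, zpow_natCast, Complex.I_pow_eq_pow_mod, hk, pow_one, Complex.inv_I]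

theorem I_zpow_neg_of_mod_four_eq_three {k : ℕ} (hk : k % 4 = 3) :
    Complex.I ^ (-(k : ℤ)) = Complex.I := by
  rw [zpow_neg, zpow_natCast, Complex.I_pow_eq_pow_mod, hk, Complex.I_pow_three, inv_neg,
    Complex.inv_I, neg_neg]

section ImaginaryAxis

variable [Fintype V]

/-- `M_H(t) = i^(-|V(H)|) μ_H(it)`, written out as the real polynomial obtained from `μ_H` by
making all signs positive. -/
noncomputable def realMatchPoly (H : SimpleGraph V) (t : ℝ) : ℝ :=
  ∑ j ∈ range (Fintype.card V / 2 + 1), (mcount H j : ℝ) * t ^ (Fintype.card V - 2 * j)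

theorem I_zpow_mul_matchPolyFun (H : SimpleGraph V) (t : ℝ) :
    Complex.I ^ (-(Fintype.card V : ℤ)) * matchPolyFun H (Complex.I * t) =
      (realMatchPoly H t : ℂ) := by
  rw [zpow_neg, zpow_natCast, inv_mul_eq_iff_eq_mul₀ (pow_ne_zero _ Complex.I_ne_zero),
    matchPolyFun, realMatchPoly, Complex.ofReal_sum, mul_sum]
  refine sum_congr rfl fun j hj ↦ ?_
  have hI : Complex.I ^ Fintype.card V = (-1) ^ j * Complex.I ^ (Fintype.card V - 2 * j) := by
    rw [mem_range] at hj
    rw [← Complex.I_sq, ← pow_mul, ← pow_add, Nat.add_sub_cancel' (by lia)]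
  push_cast
  rw [hI, mul_pow]
  ring

theorem realMatchPoly_pos (H : SimpleGraph V) {t : ℝ} (ht : 0 < t) : 0 < realMatchPoly H t := by
  have hempty : (0 : ℝ) < mcount H 0 := Nat.cast_pos.mpr (mcount_zero_pos H)
  exact sum_pos' (fun j _ ↦ by positivity) ⟨0, mem_range.mpr (Nat.succ_pos _), by positivity⟩

variable [DecidableEq V] {G : SimpleGraph V} {v : V} {c : G.Walk v v}

theorem I_zpow_mul_matchPolyFun_compl_support (hc : c.IsCycle) (t : ℝ) :
    Complex.I ^ (-((Fintype.card V : ℤ) - c.length)) *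
        matchPolyFun (G.induce ↑(c.support.toFinset)ᶜ) (Complex.I * t) =
      (realMatchPoly (G.induce ↑(c.support.toFinset)ᶜ) t : ℂ) := by
  have hcard : #c.support.toFinset = c.length :=
    support_cyclePerm hc ▸ card_support_cyclePerm hc
  have hle : c.length ≤ Fintype.card V := hcard ▸ card_le_univ _
  rw [← I_zpow_mul_matchPolyFun, Fintype.card_of_finset' _ fun _ ↦ mem_coe.symm,
    card_compl, hcard, Nat.cast_sub hle]

variable [DecidableRel G.Adj]

theorem I_zpow_mul_charFun (hc : IsUniqueCycle c) (x : ℂ) :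
    Complex.I ^ (-(Fintype.card V : ℤ)) * charFun G x =
      Complex.I ^ (-(Fintype.card V : ℤ)) * matchPolyFun G x -
        2 * Complex.I ^ (-(c.length : ℤ)) * (Complex.I ^ (-((Fintype.card V : ℤ) - c.length)) *
          matchPolyFun (G.induce ↑(c.support.toFinset)ᶜ) x) := by
  have hsplit : Complex.I ^ (-(Fintype.card V : ℤ)) =
      Complex.I ^ (-(c.length : ℤ)) * Complex.I ^ (-((Fintype.card V : ℤ) - c.length)) := by
    rw [← zpow_add₀ Complex.I_ne_zero]
    ring_nf
  rw [hc.charFun_eq, mul_sub]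
  nth_rw 2 [hsplit]
  ring

theorem re_I_zpow_mul_charFun (hc : IsUniqueCycle c) (hodd : Odd c.length) (t : ℝ) :
    (Complex.I ^ (-(Fintype.card V : ℤ)) * charFun G (Complex.I * t)).re = realMatchPoly G t := by
  rw [I_zpow_mul_charFun hc, I_zpow_mul_matchPolyFun,
    I_zpow_mul_matchPolyFun_compl_support hc.isCycle]
  rcases Nat.odd_mod_four_iff.mp (Nat.odd_iff.mp hodd) with hk | hk
  · simp [I_zpow_neg_of_mod_four_eq_one hk]
  · simp [I_zpow_neg_of_mod_four_eq_three hk]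

end ImaginaryAxis

theorem charFun_decomposition_general [Fintype V] [DecidableEq V] (G : SimpleGraph V)
    [DecidableRel G.Adj] {v : V} {c : G.Walk v v} (hc : IsUniqueCycle c) (hodd : Odd c.length) :
    (c.length % 4 = 1 → ∀ x : ℂ,
      Complex.I ^ (-(Fintype.card V : ℤ)) * charFun G x =
        Complex.I ^ (-(Fintype.card V : ℤ)) * matchPolyFun G x +
          2 * Complex.I * (Complex.I ^ (-((Fintype.card V : ℤ) - c.length)) *
            matchPolyFun (G.induce ↑(c.support.toFinset)ᶜ) x)) ∧
    (c.length % 4 = 3 → ∀ x : ℂ,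
      Complex.I ^ (-(Fintype.card V : ℤ)) * charFun G x =
        Complex.I ^ (-(Fintype.card V : ℤ)) * matchPolyFun G x -
          2 * Complex.I * (Complex.I ^ (-((Fintype.card V : ℤ) - c.length)) *
            matchPolyFun (G.induce ↑(c.support.toFinset)ᶜ) x)) ∧
    (∀ t : ℝ, 0 < t →
      0 < (Complex.I ^ (-(Fintype.card V : ℤ)) * charFun G (Complex.I * t)).re) := by
  refine ⟨fun hk x ↦ ?_, fun hk x ↦ ?_, fun t ht ↦ ?_⟩
  · rw [I_zpow_mul_charFun hc, I_zpow_neg_of_mod_four_eq_one hk, mul_neg, neg_mul, sub_neg_eq_add]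
  · rw [I_zpow_mul_charFun hc, I_zpow_neg_of_mod_four_eq_three hk]
  · rw [re_I_zpow_mul_charFun hc hodd]
    exact realMatchPoly_pos G ht

/-- For a unicyclic graph `G` of order `n` with odd cycle of length `k`, writing
`M_G(t) = i^(−n) μ_G(it)` and `M_F(t) = i^(−(n−k)) μ_F(it)` with `F = G − V(C)`:
`i^(−n) φ_G(it) = M_G(t) + 2i M_F(t)` if `k ≡ 1 (mod 4)`, and
`i^(−n) φ_G(it) = M_G(t) − 2i M_F(t)` if `k ≡ 3 (mod 4)`; in both cases
`i^(−n) φ_G(it)` has positive real part for every `t > 0`. -/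
theorem charFun_decomposition [Fintype V] [DecidableEq V] (G : SimpleGraph V)
    [DecidableRel G.Adj]
    (hconn : G.Connected) (hedge : G.edgeFinset.card = Fintype.card V)
    (v : V) (c : G.Walk v v) (hc : c.IsCycle) (hodd : Odd c.length) :
    (c.length % 4 = 1 → ∀ t : ℝ, 0 < t →
      Complex.I ^ (-(Fintype.card V : ℤ)) * charFun G (Complex.I * t) =
        Complex.I ^ (-(Fintype.card V : ℤ)) * matchPolyFun G (Complex.I * t) +
          2 * Complex.I * (Complex.I ^ (-((Fintype.card V : ℤ) - c.length)) *
            matchPolyFun (G.induce ↑(c.support.toFinset)ᶜ) (Complex.I * t))) ∧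
    (c.length % 4 = 3 → ∀ t : ℝ, 0 < t →
      Complex.I ^ (-(Fintype.card V : ℤ)) * charFun G (Complex.I * t) =
        Complex.I ^ (-(Fintype.card V : ℤ)) * matchPolyFun G (Complex.I * t) -
          2 * Complex.I * (Complex.I ^ (-((Fintype.card V : ℤ) - c.length)) *
            matchPolyFun (G.induce ↑(c.support.toFinset)ᶜ) (Complex.I * t))) ∧
    (∀ t : ℝ, 0 < t →
      0 < (Complex.I ^ (-(Fintype.card V : ℤ)) * charFun G (Complex.I * t)).re) := by
  have h := charFun_decomposition_general G (isUniqueCycle_of_connected hconn hedge hc) hodd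
  exact ⟨fun hk t _ ↦ h.1 hk _, fun hk t _ ↦ h.2.1 hk _, h.2.2⟩
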